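/- arXiv:2004.12496 — 2 statements merged into one kernel-verified Lean document; each statement's English description precedes it below -/
import Mathlib

section
/- Let p be a distribution on {−1,1}^n, let q ∈ ℕ₊, r ≥ 0 and τ > 0, and let Z^(r) be the statistic built from 2q independent samples of p. If ‖μ(⊙^r(p))‖₂² ≥ 2τ and Pr[Z^(r) ≤ τ] ≥ 1/3, then ‖μ(⊙^{r+1}(p))‖₂² ≥ (τ·q/24)². -/
/-!
Write `K(x,y) = ⟨x,y⟩^(2^r)`, `M = ‖μ(⊙^r(p))‖₂²` and `T = ‖μ(⊙^{r+1}(p))‖₂²`.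
Since `K(x,y) = ⟨φ(x), φ(y)⟩` for the tensor-power map `φ(x) = x^{⊗2^r}`, we have `M = E[K(x,y)]`,
and `T = E[K(x,y)²]` (`tensorNormSq_eq`). Thus `Z` has mean `M`, and expanding its second moment
first over the `X` samples and then over the `Y` samples gives
`q⁴ E[Z²] = q² T + 2 q² (q-1) G + q² (q-1)² M²`, where `G = E_y[⟨φ(y), E φ⟩²]`
(`pair_second_moment`). With `Σ = E[φ φᵀ]`, which has squared Frobenius norm `T`, the
Cauchy–Schwarz inequality yields `G = ⟨Σ, μ μᵀ⟩ ≤ M √T` (`sq_G_le`).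

The event `Z ≤ τ ≤ M/2` forces `|Z - M| ≥ M/2`, so Chebyshev's inequality gives
`M²/12 ≤ Var Z ≤ T/q² + 2 M √T / q`, which is impossible when `√T < τ q / 24 ≤ M q / 48`.
-/

open Finset

namespace JuntaPaper

/-- The Boolean cube `{-1,1}^n`, encoded with `true ↦ 1` and `false ↦ -1`. -/
abbrev Cube (n : ℕ) := Fin n → Bool

/-- The real value of a bit. -/
noncomputable def bval (b : Bool) : ℝ := if b then 1 else -1

/-- `p` is a probability distribution on the cube. -/
def IsDist {n : ℕ} (p : Cube n → ℝ) : Prop :=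
  (∀ x, 0 ≤ p x) ∧ ∑ x, p x = 1

/-- Total variation distance between two distributions on a finite set. -/
noncomputable def dtv {α : Type*} [Fintype α] (p q : α → ℝ) : ℝ :=
  (1 / 2) * ∑ x, |p x - q x|

/-- The uniform distribution on the cube. -/
noncomputable def uniform (n : ℕ) : Cube n → ℝ := fun _ => (2 : ℝ)⁻¹ ^ n

/-- `p` is a junta distribution over the coordinates in `J`. -/
def JuntaOn {n : ℕ} (J : Finset (Fin n)) (p : Cube n → ℝ) : Prop :=
  ∀ x y : Cube n, (∀ i ∈ J, x i = y i) → p x = p y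

/-- The mean vector of a distribution on the cube. -/
noncomputable def meanVec {n : ℕ} (p : Cube n → ℝ) (i : Fin n) : ℝ :=
  ∑ x, p x * bval (x i)

/-- A restriction: `none` means `*` (free), `some b` fixes the coordinate to `b`. -/
abbrev Restr (n : ℕ) := Fin n → Option Bool

/-- `x` agrees with the restriction `ρ` on all fixed coordinates. -/
def agrees {n : ℕ} (ρ : Restr n) (x : Cube n) : Prop :=
  ∀ i : Fin n, ∀ b : Bool, ρ i = some b → x i = b

instance {n : ℕ} (ρ : Restr n) (x : Cube n) : Decidable (agrees ρ x) :=
  inferInstanceAs (Decidable (∀ i : Fin n, ∀ b : Bool, ρ i = some b → x i = b))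

/-- The set of free (star) coordinates of a restriction. -/
def starsOf {n : ℕ} (ρ : Restr n) : Finset (Fin n) :=
  Finset.univ.filter (fun i => ρ i = none)

/-- The probability mass of the subcube described by `ρ`. -/
noncomputable def mass {n : ℕ} (p : Cube n → ℝ) (ρ : Restr n) : ℝ :=
  ∑ x, if agrees ρ x then p x else 0

/-- The conditional probability of `x` given the subcube `ρ` (this is the restricted
distribution `p|ρ`, viewed on completions of `ρ`). -/
noncomputable def condProb {n : ℕ} (p : Cube n → ℝ) (ρ : Restr n) (x : Cube n) : ℝ :=
  (if agrees ρ x then p x else 0) / mass p ρ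

/-- The `i`-th coordinate of the mean vector of the restricted distribution `p|ρ`. -/
noncomputable def condMean {n : ℕ} (p : Cube n → ℝ) (ρ : Restr n) (i : Fin n) : ℝ :=
  ∑ x, condProb p ρ x * bval (x i)

/-- The Euclidean norm `‖μ(p|ρ)‖₂` of the mean vector of the restricted
distribution `p|ρ` (over its free coordinates). -/
noncomputable def restNorm {n : ℕ} (p : Cube n → ℝ) (ρ : Restr n) : ℝ :=
  Real.sqrt (∑ i, (if ρ i = none then condMean p ρ i else 0) ^ 2)

/-- The restriction with stars exactly on `S` and fixed to `x` elsewhere. -/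
def restrictOn {n : ℕ} (S : Finset (Fin n)) (x : Cube n) : Restr n :=
  fun i => if i ∈ S then none else some (x i)

/-- Probability that `S_σ(T)` produces `S ⊆ T`. -/
noncomputable def subsetProb {n : ℕ} (σ : ℝ) (T S : Finset (Fin n)) : ℝ :=
  σ ^ S.card * (1 - σ) ^ (T.card - S.card)

/-- Expectation of `F(ν)` for `ν ∼ D_σ(p|ρ)`: draw `x ∼ p` conditioned on agreeing with
`ρ`, draw `S ⊆ stars(ρ)` including each element independently with probability `σ`, and
evaluate `F` on the combined restriction (stars exactly on `S`). -/
noncomputable def EDσCond {n : ℕ} (p : Cube n → ℝ) (ρ : Restr n) (σ : ℝ)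
    (F : Restr n → ℝ) : ℝ :=
  ∑ x, condProb p ρ x *
    ∑ S ∈ (starsOf ρ).powerset, subsetProb σ (starsOf ρ) S * F (restrictOn S x)

/-- The all-stars restriction (so `p|allStars n = p`). -/
def allStars (n : ℕ) : Restr n := fun _ => none

/-- `‖μ(⊙^r(p))‖₂²`: the squared Euclidean norm of the `r`-th order tensor mean of `p`,
whose entry at `(i_1,…,i_R) ∈ [n]^R` (with `R = 2^r`) is `E_{x∼p}[x_{i_1}⋯x_{i_R}]`. -/
noncomputable def tensorNormSq {n : ℕ} (p : Cube n → ℝ) (r : ℕ) : ℝ :=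
  ∑ I : Fin (2 ^ r) → Fin n, (∑ x, p x * ∏ t, bval (x (I t))) ^ 2

/-- The standard inner product of two cube points viewed in `{-1,1}^n ⊆ ℝ^n`. -/
noncomputable def innerB {n : ℕ} (x y : Cube n) : ℝ := ∑ i, bval (x i) * bval (y i)

/-- The test statistic `Z^(r) = (1/q²) Σ_i Σ_j ⟨X_i, Y_j⟩^{2^r}`. -/
noncomputable def Zstat {n : ℕ} (q : ℕ) (r : ℕ) (X Y : Fin q → Cube n) : ℝ :=
  (1 / (q : ℝ) ^ 2) * ∑ i, ∑ j, innerB (X i) (Y j) ^ (2 ^ r)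

/-- Expectation of `F(X₁,…,X_q, Y₁,…,Y_q)` over `2q` independent samples from `p`. -/
noncomputable def Esamp {n : ℕ} (p : Cube n → ℝ) (q : ℕ)
    (F : (Fin q → Cube n) → (Fin q → Cube n) → ℝ) : ℝ :=
  ∑ X : Fin q → Cube n, ∑ Y : Fin q → Cube n,
    (∏ i, p (X i)) * (∏ j, p (Y j)) * F X Y

open Classical in
/-- Probability of an event of the `2q` independent samples from `p`. -/
noncomputable def Prsamp {n : ℕ} (p : Cube n → ℝ) (q : ℕ)
    (E : (Fin q → Cube n) → (Fin q → Cube n) → Prop) : ℝ :=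
  ∑ X : Fin q → Cube n, ∑ Y : Fin q → Cube n,
    (∏ i, p (X i)) * (∏ j, p (Y j)) * (if E X Y then 1 else 0)

/-- `p` is a `k`-junta distribution. -/
def IsJuntaDist {n : ℕ} (k : ℕ) (p : Cube n → ℝ) : Prop :=
  ∃ J : Finset (Fin n), J.card ≤ k ∧ JuntaOn J p

/-- The thresholds `τ_0 = ε²n/2`, `τ_r = q²τ_{r-1}²/5000`. -/
noncomputable def tauSeq (q : ℕ) (ε : ℝ) (n : ℕ) : ℕ → ℝ
  | 0 => ε ^ 2 * n / 2
  | r + 1 => (q : ℝ) ^ 2 * tauSeq q ε n r ^ 2 / 5000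

section Moments

variable {α : Type*} [Fintype α] (p : α → ℝ)

/-- Expectation of `F` over `q` independent samples, drawing the first sample separately. -/
lemma sum_prod_succ (q : ℕ) (F : (Fin (q + 1) → α) → ℝ) :
    ∑ X, (∏ i, p (X i)) * F X
      = ∑ x, p x * ∑ X : Fin q → α, (∏ i, p (X i)) * F (Fin.cons x X) := by
  rw [← (Fin.consEquiv (fun _ : Fin (q + 1) => α)).sum_comp, Fintype.sum_prod_type]
  refine sum_congr rfl fun x _ => ?_
  rw [mul_sum]
  refine sum_congr rfl fun X _ => ?_
  simp [Fin.consEquiv, Fin.prod_univ_succ, mul_assoc]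

variable {p}

lemma sample_mass (hp : ∑ x, p x = 1) (q : ℕ) :
    ∑ X : Fin q → α, ∏ i, p (X i) = 1 := by
  have h := Fintype.sum_pow p q
  rw [hp, one_pow] at h
  exact h.symm

lemma sample_first_moment (hp : ∑ x, p x = 1) (f : α → ℝ) (q : ℕ) :
    ∑ X : Fin q → α, (∏ i, p (X i)) * ∑ i, f (X i) = q * ∑ x, p x * f x := by
  induction q with
  | zero => simp
  | succ q ih =>
    rw [sum_prod_succ]
    simp only [Fin.sum_univ_succ, Fin.cons_zero, Fin.cons_succ, mul_add, sum_add_distrib, ih,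
      ← sum_mul, sample_mass hp, hp]
    push_cast
    simp only [one_mul, add_mul, add_comm]

lemma sample_second_moment (hp : ∑ x, p x = 1) (f : α → ℝ) (q : ℕ) :
    ∑ X : Fin q → α, (∏ i, p (X i)) * (∑ i, f (X i)) ^ 2
      = q * (∑ x, p x * f x ^ 2) + q * (q - 1) * (∑ x, p x * f x) ^ 2 := by
  induction q with
  | zero => simp
  | succ q ih =>
    rw [sum_prod_succ]
    have step : ∀ x, ∑ X : Fin q → α, (∏ i, p (X i)) *
          (∑ i, f ((Fin.cons x X : Fin (q + 1) → α) i)) ^ 2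
        = f x ^ 2 + 2 * f x * (q * ∑ y, p y * f y)
          + (q * (∑ x, p x * f x ^ 2) + q * (q - 1) * (∑ x, p x * f x) ^ 2) := by
      intro x
      rw [← ih, ← sample_first_moment hp f q, ← mul_one (f x ^ 2), ← sample_mass hp q, mul_sum,
        mul_sum, ← sum_add_distrib, ← sum_add_distrib]
      refine sum_congr rfl fun X _ => ?_
      simp only [Fin.sum_univ_succ, Fin.cons_zero, Fin.cons_succ]
      ring
    simp only [step]
    have e : ∀ x, p x * (f x ^ 2 + 2 * f x * (q * ∑ y, p y * f y)
          + (q * (∑ x, p x * f x ^ 2) + q * (q - 1) * (∑ x, p x * f x) ^ 2))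
        = p x * f x ^ 2 + (p x * f x) * (2 * (q * ∑ y, p y * f y))
          + p x * (q * (∑ x, p x * f x ^ 2) + q * (q - 1) * (∑ x, p x * f x) ^ 2) :=
      fun x => by ring
    simp only [e, sum_add_distrib, ← sum_mul, hp]
    push_cast
    ring

lemma pair_first_moment (hp : ∑ x, p x = 1) (K : α → α → ℝ) (q : ℕ) :
    ∑ X : Fin q → α, ∑ Y : Fin q → α,
        (∏ i, p (X i)) * (∏ j, p (Y j)) * ∑ i, ∑ j, K (X i) (Y j)
      = q ^ 2 * ∑ x, p x * ∑ y, p y * K x y := by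
  have inner : ∀ X : Fin q → α, ∑ Y : Fin q → α,
        (∏ i, p (X i)) * (∏ j, p (Y j)) * ∑ i, ∑ j, K (X i) (Y j)
      = (∏ i, p (X i)) * ∑ i, (q * ∑ y, p y * K (X i) y) := by
    intro X
    have h := sample_first_moment hp (fun y => ∑ i, K (X i) y) q
    have e : ∑ y, p y * ∑ i, K (X i) y = ∑ i, ∑ y, p y * K (X i) y := by
      simp only [mul_sum]
      exact sum_comm
    simp only [mul_assoc, ← mul_sum]
    rw [← e, ← h]
    congr 1
    exact sum_congr rfl fun Y _ => by rw [sum_comm]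
  simp only [inner]
  rw [sample_first_moment hp (fun x => q * ∑ y, p y * K x y)]
  simp only [mul_left_comm (p _) (q : ℝ), ← mul_sum]
  ring

/-- The sum `∑ i, ∑ j, K (X i) (Y j)` is, for fixed `X`, a sum of i.i.d. terms in `Y`; its second
moment thus follows from `sample_second_moment`, applied once for `Y` and then for `X`. -/
lemma pair_second_moment (hp : ∑ x, p x = 1) (K : α → α → ℝ) (hK : ∀ x y, K x y = K y x) (q : ℕ) :
    ∑ X : Fin q → α, ∑ Y : Fin q → α,
        (∏ i, p (X i)) * (∏ j, p (Y j)) * (∑ i, ∑ j, K (X i) (Y j)) ^ 2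
      = q ^ 2 * (∑ x, p x * ∑ y, p y * K x y ^ 2)
        + 2 * q ^ 2 * (q - 1) * (∑ x, p x * (∑ y, p y * K x y) ^ 2)
        + q ^ 2 * (q - 1) ^ 2 * (∑ x, p x * ∑ y, p y * K x y) ^ 2 := by
  have inner : ∀ X : Fin q → α, ∑ Y : Fin q → α,
        (∏ i, p (X i)) * (∏ j, p (Y j)) * (∑ i, ∑ j, K (X i) (Y j)) ^ 2
      = q * ∑ y, p y * ((∏ i, p (X i)) * (∑ i, K (X i) y) ^ 2)
        + q * (q - 1) * ((∏ i, p (X i)) * (∑ i, ∑ y, p y * K (X i) y) ^ 2) := by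
    intro X
    have h := sample_second_moment hp (fun y => ∑ i, K (X i) y) q
    have e : ∑ y, p y * ∑ i, K (X i) y = ∑ i, ∑ y, p y * K (X i) y := by
      simp only [mul_sum]
      exact sum_comm
    rw [e] at h
    simp only [mul_assoc, ← mul_sum]
    have h' : ∑ Y : Fin q → α, (∏ j, p (Y j)) * (∑ i, ∑ j, K (X i) (Y j)) ^ 2
        = ∑ Y : Fin q → α, (∏ j, p (Y j)) * (∑ j, ∑ i, K (X i) (Y j)) ^ 2 :=
      sum_congr rfl fun Y _ => by rw [sum_comm]
    rw [h', h]
    simp only [mul_left_comm (p _) (∏ i, p (X i)), ← mul_sum]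
    ring
  have h1 : ∑ X : Fin q → α, ∑ y, p y * ((∏ i, p (X i)) * (∑ i, K (X i) y) ^ 2)
      = q * (∑ x, p x * ∑ y, p y * K x y ^ 2)
        + q * (q - 1) * ∑ x, p x * (∑ y, p y * K x y) ^ 2 := by
    rw [sum_comm]
    simp only [← mul_sum]
    rw [mul_sum, mul_sum, ← sum_add_distrib]
    refine sum_congr rfl fun y _ => ?_
    rw [sample_second_moment hp (fun x => K x y)]
    simp only [hK _ y]
    ring
  simp only [inner, sum_add_distrib]
  rw [← mul_sum, ← mul_sum, h1, sample_second_moment hp (fun x => ∑ y, p y * K x y)]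
  ring

end Moments

section Features

variable {α ι : Type*} [Fintype α] [Fintype ι] (p : α → ℝ) (φ : α → ι → ℝ)

lemma sum_mean_sq :
    ∑ a, (∑ x, p x * φ x a) ^ 2 = ∑ x, p x * ∑ y, p y * ∑ a, φ x a * φ y a := by
  have e : ∀ a, (∑ x, p x * φ x a) ^ 2 = ∑ x, ∑ y, p x * (p y * (φ x a * φ y a)) := by
    intro a
    rw [sq, sum_mul_sum]
    exact sum_congr rfl fun x _ => sum_congr rfl fun y _ => by ring
  simp only [e, mul_sum]
  rw [sum_comm]
  exact sum_congr rfl fun x _ => sum_comm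

/-- Cauchy–Schwarz for the Frobenius inner product of the second moment matrix `E[φ φᵀ]` and the
rank-one matrix `μ μᵀ`, where `μ = E[φ]`. -/
lemma sq_G_le :
    (∑ x, p x * (∑ y, p y * ∑ a, φ x a * φ y a) ^ 2) ^ 2
      ≤ (∑ x, p x * ∑ y, p y * ∑ a, φ x a * φ y a) ^ 2
        * ∑ x, p x * ∑ y, p y * (∑ a, φ x a * φ y a) ^ 2 := by
  set m : ι → ℝ := fun a => ∑ x, p x * φ x a with hm
  have hg : ∀ x, ∑ y, p y * ∑ a, φ x a * φ y a = ∑ a, φ x a * m a := by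
    intro x
    simp only [hm, mul_sum]
    rw [sum_comm]
    exact sum_congr rfl fun a _ => sum_congr rfl fun y _ => by ring
  have hG : ∑ x, p x * (∑ y, p y * ∑ a, φ x a * φ y a) ^ 2
      = ∑ c : ι × ι, (m c.1 * m c.2) * ∑ x, p x * (φ x c.1 * φ x c.2) := by
    simp only [hg]
    simp only [mul_sum (univ : Finset α)]
    rw [sum_comm]
    refine sum_congr rfl fun x _ => ?_
    rw [sq, sum_mul_sum, Fintype.sum_prod_type, mul_sum]
    refine sum_congr rfl fun a _ => ?_
    rw [mul_sum]
    exact sum_congr rfl fun b _ => by ring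
  have hM : (∑ x, p x * ∑ y, p y * ∑ a, φ x a * φ y a) ^ 2
      = ∑ c : ι × ι, (m c.1 * m c.2) ^ 2 := by
    rw [← sum_mean_sq, sq, sum_mul_sum, Fintype.sum_prod_type]
    exact sum_congr rfl fun a _ => sum_congr rfl fun b _ => by rw [mul_pow]
  have hT : ∑ x, p x * ∑ y, p y * (∑ a, φ x a * φ y a) ^ 2
      = ∑ c : ι × ι, (∑ x, p x * (φ x c.1 * φ x c.2)) ^ 2 := by
    rw [sum_mean_sq p (fun x (c : ι × ι) => φ x c.1 * φ x c.2)]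
    refine sum_congr rfl fun x _ => ?_
    congr 1
    refine sum_congr rfl fun y _ => ?_
    rw [sq, sum_mul_sum, Fintype.sum_prod_type]
    congr 1
    exact sum_congr rfl fun a _ => sum_congr rfl fun b _ => by ring
  rw [hG, hM, hT]
  exact sum_mul_sq_le_sq_mul_sq _ _ _

end Features

/-- Kernel identity for the tensor-power feature map. -/
lemma innerB_pow {n : ℕ} (x y : Cube n) (R : ℕ) :
    innerB x y ^ R = ∑ I : Fin R → Fin n, (∏ t, bval (x (I t))) * ∏ t, bval (y (I t)) := by
  rw [innerB, Fintype.sum_pow]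
  simp only [prod_mul_distrib]

lemma tensorNormSq_eq {n : ℕ} (p : Cube n → ℝ) (r : ℕ) :
    tensorNormSq p r = ∑ x, p x * ∑ y, p y * innerB x y ^ (2 ^ r) := by
  simp only [innerB_pow]
  exact sum_mean_sq p (fun x (I : Fin (2 ^ r) → Fin n) => ∏ t, bval (x (I t)))

/-- Let `p` be a distribution on `{-1,1}^n`, `q ≥ 1`, `r ≥ 0`, `τ > 0`,
and let `Z^(r)` be the statistic built from `2q` independent samples of `p`.
If `‖μ(⊙^r(p))‖₂² ≥ 2τ` and `Pr[Z^(r) ≤ τ] ≥ 1/3`, then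
`‖μ(⊙^{r+1}(p))‖₂² ≥ (τq/24)²`. -/
theorem statement12 (n : ℕ) (p : Cube n → ℝ) (hp : IsDist p) (q : ℕ) (hq : 0 < q)
    (r : ℕ) (τ : ℝ) (hτ : 0 < τ)
    (hmean : 2 * τ ≤ tensorNormSq p r)
    (hpr : 1 / 3 ≤ Prsamp p q (fun X Y => Zstat q r X Y ≤ τ)) :
    (τ * (q : ℝ) / 24) ^ 2 ≤ tensorNormSq p (r + 1) := by
  set M := tensorNormSq p r with hM
  set T := tensorNormSq p (r + 1) with hT
  set K : Cube n → Cube n → ℝ := fun x y => innerB x y ^ (2 ^ r) with hK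
  have hKsymm : ∀ x y, K x y = K y x := fun x y => by simp only [hK, innerB, mul_comm]
  have hMK : M = ∑ x, p x * ∑ y, p y * K x y := tensorNormSq_eq p r
  have hTK : T = ∑ x, p x * ∑ y, p y * K x y ^ 2 := by
    rw [hT, tensorNormSq_eq]
    simp only [hK, pow_succ, pow_mul, pow_zero, one_mul]
  set G := ∑ x, p x * (∑ y, p y * K x y) ^ 2 with hG
  have hG0 : 0 ≤ G := sum_nonneg fun x _ => mul_nonneg (hp.1 x) (sq_nonneg _)
  have hGT : G ^ 2 ≤ M ^ 2 * T := by
    rw [hMK, hTK, hG]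
    simp only [hK, innerB_pow]
    exact sq_G_le p (fun x (I : Fin (2 ^ r) → Fin n) => ∏ t, bval (x (I t)))
  have hq1 : (1 : ℝ) ≤ q := by exact_mod_cast hq
  have hm1 := pair_first_moment hp.2 K q
  have hm2 := pair_second_moment hp.2 K hKsymm q
  rw [← hMK] at hm1
  rw [← hMK, ← hTK, ← hG] at hm2
  have hmass : ∑ X : Fin q → Cube n, ∑ Y : Fin q → Cube n,
      (∏ i, p (X i)) * (∏ j, p (Y j)) = 1 := by
    rw [← sum_mul_sum, sample_mass hp.2, one_mul]
  -- The variance of `q² Z`.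
  have hvar : ∑ X : Fin q → Cube n, ∑ Y : Fin q → Cube n, (∏ i, p (X i)) * (∏ j, p (Y j)) *
        ((∑ i, ∑ j, K (X i) (Y j)) - q ^ 2 * M) ^ 2
      = (q ^ 2 * T + 2 * q ^ 2 * (q - 1) * G + q ^ 2 * (q - 1) ^ 2 * M ^ 2)
        - 2 * (q ^ 2 * M) * (q ^ 2 * M) + (q ^ 2 * M) ^ 2 * 1 := by
    rw [← hm2]
    nth_rewrite 3 [← hm1]
    rw [← hmass]
    simp only [mul_sum (univ : Finset (Fin q → Cube n)), ← sum_sub_distrib, ← sum_add_distrib]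
    exact sum_congr rfl fun X _ => sum_congr rfl fun Y _ => by ring
  -- Chebyshev's inequality: on the event `Z ≤ τ`, the deviation of `q² Z` is at least `q² M / 2`.
  have hcheb : Prsamp p q (fun X Y => Zstat q r X Y ≤ τ) * (q ^ 2 * M / 2) ^ 2
      ≤ ∑ X : Fin q → Cube n, ∑ Y : Fin q → Cube n, (∏ i, p (X i)) * (∏ j, p (Y j)) *
        ((∑ i, ∑ j, K (X i) (Y j)) - q ^ 2 * M) ^ 2 := by
    rw [Prsamp]
    simp only [sum_mul]
    refine sum_le_sum fun X _ => sum_le_sum fun Y _ => ?_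
    rw [mul_assoc]
    refine mul_le_mul_of_nonneg_left ?_
      (mul_nonneg (prod_nonneg fun i _ => hp.1 _) (prod_nonneg fun i _ => hp.1 _))
    split_ifs with h
    · have hW : ∑ i, ∑ j, K (X i) (Y j) ≤ q ^ 2 * τ := by
        rw [Zstat, one_div, inv_mul_le_iff₀ (by positivity)] at h
        exact h
      have hle : (q : ℝ) ^ 2 * τ ≤ q ^ 2 * (M / 2) :=
        mul_le_mul_of_nonneg_left (by linarith) (by positivity)
      have h0 : 0 ≤ (q : ℝ) ^ 2 * M := mul_nonneg (by positivity) (by linarith)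
      nlinarith
    · rw [zero_mul]
      exact sq_nonneg _
  by_contra! hlt
  have hGlt : G ≤ M * (τ * q / 24) := by
    refine abs_le_of_sq_le_sq' ?_ (mul_nonneg (by linarith) (by positivity)) |>.2
    calc G ^ 2 ≤ M ^ 2 * T := hGT
      _ ≤ M ^ 2 * (τ * q / 24) ^ 2 := by gcongr
      _ = _ := by ring
  have hτM : τ ≤ M / 2 := by linarith
  have hM0 : 0 < M := by linarith
  have hb1 : τ * q / 24 ≤ M * q / 48 := by nlinarith
  have hT' : T ≤ (M * q / 48) ^ 2 := hlt.le.trans (by gcongr)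
  have hG' : G ≤ M ^ 2 * q / 48 := by nlinarith
  have hlow : 1 / 3 * ((q : ℝ) ^ 2 * M / 2) ^ 2
      ≤ (q ^ 2 * T + 2 * q ^ 2 * (q - 1) * G + q ^ 2 * (q - 1) ^ 2 * M ^ 2)
        - 2 * (q ^ 2 * M) * (q ^ 2 * M) + (q ^ 2 * M) ^ 2 * 1 :=
    (mul_le_mul_of_nonneg_right hpr (sq_nonneg _)).trans (hcheb.trans_eq hvar)
  have a1 : (q : ℝ) ^ 2 * T ≤ q ^ 2 * (M * q / 48) ^ 2 := by gcongr
  have a2 : 2 * (q : ℝ) ^ 2 * (q - 1) * G ≤ 2 * q ^ 2 * q * (M ^ 2 * q / 48) := by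
    gcongr
    linarith
  have a3 : (q : ℝ) ^ 2 * (q - 1) ^ 2 * M ^ 2 ≤ q ^ 2 * q ^ 2 * M ^ 2 := by
    gcongr
    linarith
  have a4 : 0 < (q : ℝ) ^ 4 * M ^ 2 := by positivity
  nlinarith

end JuntaPaper
end

section
/- There exist constants C > 0 and n₀ ∈ ℕ such that the following holds for all n ≥ n₀, k ∈ ℕ and ε ∈ (0,1). Let p be any k-junta distribution on {−1,1}^n with ‖μ(p)‖₂ ≤ ε·√n/100. Set q = ⌈C·max{(k+√n)/(ε²·n), (k+√n)/(ε·√n)}⌉, r₀ = ⌈log₂ log₂ n⌉, τ_0 = ε²·n/2, and τ_r = q²·τ_{r−1}²/5000 for r ≥ 1, and let Z^(r) be the statistic built from 2q independent samples of p. Then for every r ∈ {0, 1, …, r₀}, Pr[Z^(r) > τ_r] ≤ (1/25)·(1/2)^{2^r − 1}. -/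
/-!
The moments `M_R = E ⟨X, Y⟩ ^ R`, for `X, Y` independent samples from `p`, control every `Z^(r)`.

Write `A = k + √n`. In a `k`-junta distribution the second moment `E[x_a x_b]` vanishes unless
`a = b` or both `a` and `b` lie in the junta set, so `M_2 = ∑_{a,b} E[x_a x_b]²` is at most
`k² + n ≤ A²` (`sum_secMom_sq_le`). Since `|⟨X, Y⟩| ≤ n ≤ A²`, this gives `M_R ≤ A ^ (2R - 2)`
for all `R ≥ 2` (`pairMoment_le`).

For `r ≥ 1`, with `R = 2 ^ r`, Markov's inequality for `Z^(r)`, whose mean is `M_R`, suffices: the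
threshold is `τ_r = (5000 / q²) (q² ε² n / 10⁴) ^ R` (`tauSeq_mul`), and the choice of `q` gives
both `q ε √n ≥ C A` and `q ε² n ≥ C A`.

For `r = 0`, Markov's inequality is applied to `(Z^(0))²`. Its mean is
`q⁻⁴ ∑_{a,b} (q E[x_a x_b] + (q² - q) μ_a μ_b)² ≤ 2 (M_2 / q² + ‖μ‖⁴)` (`Esamp_Zstat_zero_sq_le`),
which is small compared with `τ_0²`. No variance has to be computed, because `‖μ‖²` is
itself a tiny fraction of `τ_0`.
-/

open Finset

namespace JuntaPaper

/-- The expectation of `f` over `q` independent samples from `p`. -/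
noncomputable def Eprod {n : ℕ} (p : Cube n → ℝ) (q : ℕ) (f : (Fin q → Cube n) → ℝ) : ℝ :=
  ∑ X : Fin q → Cube n, (∏ i, p (X i)) * f X

/-- The second moment `E[x_a x_b]` for `x ∼ p`. -/
noncomputable def secMom {n : ℕ} (p : Cube n → ℝ) (a b : Fin n) : ℝ :=
  ∑ x, p x * (bval (x a) * bval (x b))

/-- The moment `E ⟨x, y⟩ ^ R` for independent `x, y ∼ p`. -/
noncomputable def pairMoment {n : ℕ} (p : Cube n → ℝ) (R : ℕ) : ℝ :=
  ∑ x, ∑ y, p x * p y * innerB x y ^ R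

lemma bval_mul_self (b : Bool) : bval b * bval b = 1 := by
  cases b <;> simp [bval]

lemma abs_bval (b : Bool) : |bval b| = 1 := by
  cases b <;> simp [bval]

lemma bval_not (b : Bool) : bval (!b) = -bval b := by
  cases b <;> simp [bval]

/-! ### Product expectations -/

lemma Eprod_sum {n q : ℕ} (p : Cube n → ℝ) {ι : Type*} (s : Finset ι)
    (f : ι → (Fin q → Cube n) → ℝ) :
    Eprod p q (fun X => ∑ t ∈ s, f t X) = ∑ t ∈ s, Eprod p q (f t) := by
  unfold Eprod
  simp_rw [Finset.mul_sum]
  exact Finset.sum_comm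

lemma Eprod_prod {n q : ℕ} (p : Cube n → ℝ) (f : Fin q → Cube n → ℝ) :
    Eprod p q (fun X => ∏ i, f i (X i)) = ∏ i, ∑ x, p x * f i x := by
  unfold Eprod
  simp_rw [← Finset.prod_mul_distrib]
  exact (Fintype.prod_sum (fun i x => p x * f i x)).symm

lemma Eprod_single {n q : ℕ} {p : Cube n → ℝ} (hp : IsDist p) (i : Fin q) (f : Cube n → ℝ) :
    Eprod p q (fun X => f (X i)) = ∑ x, p x * f x := by
  have h := Eprod_prod p (fun j x => if j = i then f x else 1)
  rw [Finset.prod_eq_single i (fun j _ hj => by simp [hj, hp.2]) (by simp)] at h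
  simpa using h

lemma Eprod_pair {n q : ℕ} {p : Cube n → ℝ} (hp : IsDist p) {i j : Fin q} (hij : i ≠ j)
    (f g : Cube n → ℝ) :
    Eprod p q (fun X => f (X i) * g (X j)) = (∑ x, p x * f x) * ∑ x, p x * g x := by
  have h := Eprod_prod p
    (fun l x => (if l = i then f x else 1) * (if l = j then g x else 1))
  rw [Finset.prod_eq_mul i j hij (fun l _ hl => by simp [hl.1, hl.2, hp.2]) (by simp) (by simp)]
    at h
  have hX : ∀ X : Fin q → Cube n,
      ∏ l, (if l = i then f (X l) else 1) * (if l = j then g (X l) else 1) = f (X i) * g (X j) := by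
    intro X
    rw [Finset.prod_mul_distrib]
    simp
  simp_rw [hX] at h
  simpa [hij, hij.symm] using h

lemma Esamp_eq {n q : ℕ} (p : Cube n → ℝ) (F : (Fin q → Cube n) → (Fin q → Cube n) → ℝ) :
    Esamp p q F = Eprod p q (fun X => Eprod p q (fun Y => F X Y)) := by
  unfold Esamp Eprod
  simp_rw [Finset.mul_sum, mul_assoc]

lemma Esamp_sum {n q : ℕ} (p : Cube n → ℝ) {ι : Type*} (s : Finset ι)
    (F : ι → (Fin q → Cube n) → (Fin q → Cube n) → ℝ) :
    Esamp p q (fun X Y => ∑ t ∈ s, F t X Y) = ∑ t ∈ s, Esamp p q (F t) := by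
  simp_rw [Esamp_eq, Eprod_sum]

lemma Esamp_const_mul {n q : ℕ} (p : Cube n → ℝ) (c : ℝ)
    (F : (Fin q → Cube n) → (Fin q → Cube n) → ℝ) :
    Esamp p q (fun X Y => c * F X Y) = c * Esamp p q F := by
  unfold Esamp
  simp_rw [Finset.mul_sum]
  exact Finset.sum_congr rfl fun X _ => Finset.sum_congr rfl fun Y _ => by ring

lemma Esamp_mul {n q : ℕ} (p : Cube n → ℝ) (f g : (Fin q → Cube n) → ℝ) :
    Esamp p q (fun X Y => f X * g Y) = Eprod p q f * Eprod p q g := by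
  unfold Esamp Eprod
  rw [Finset.sum_mul_sum]
  exact Finset.sum_congr rfl fun X _ => Finset.sum_congr rfl fun Y _ => by ring

/-- Markov's inequality. -/
lemma mul_Prsamp_le {n q : ℕ} {p : Cube n → ℝ} (hp : IsDist p) (t : ℝ)
    (E : (Fin q → Cube n) → (Fin q → Cube n) → Prop)
    (F : (Fin q → Cube n) → (Fin q → Cube n) → ℝ)
    (h0 : ∀ X Y, 0 ≤ F X Y) (hE : ∀ X Y, E X Y → t ≤ F X Y) :
    t * Prsamp p q E ≤ Esamp p q F := by
  unfold Prsamp Esamp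
  simp_rw [Finset.mul_sum]
  refine Finset.sum_le_sum fun X _ => Finset.sum_le_sum fun Y _ => ?_
  have hw : 0 ≤ (∏ i, p (X i)) * ∏ j, p (Y j) :=
    mul_nonneg (Finset.prod_nonneg fun i _ => hp.1 _) (Finset.prod_nonneg fun i _ => hp.1 _)
  rw [mul_left_comm]
  refine mul_le_mul_of_nonneg_left ?_ hw
  split_ifs with h
  · simpa using hE X Y h
  · simpa using h0 X Y

/-! ### Moments of a junta distribution -/

lemma abs_secMom_le {n : ℕ} {p : Cube n → ℝ} (hp : IsDist p) (a b : Fin n) :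
    |secMom p a b| ≤ 1 := by
  unfold secMom
  refine (Finset.abs_sum_le_sum_abs _ _).trans ?_
  rw [← hp.2]
  refine Finset.sum_le_sum fun x _ => ?_
  rw [abs_mul, abs_mul, abs_bval, abs_bval, abs_of_nonneg (hp.1 x)]
  simp

lemma secMom_comm {n : ℕ} (p : Cube n → ℝ) (a b : Fin n) : secMom p a b = secMom p b a := by
  unfold secMom
  exact Finset.sum_congr rfl fun x _ => by ring

lemma secMom_eq_zero {n : ℕ} {p : Cube n → ℝ} {J : Finset (Fin n)} (hJ : JuntaOn J p)
    {a b : Fin n} (ha : a ∉ J) (hab : a ≠ b) : secMom p a b = 0 := by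
  -- Flipping coordinate `a` preserves `p` and changes the sign of `x_a x_b`.
  have hinv : Function.Involutive (fun x : Cube n => Function.update x a (!x a)) := by
    intro x
    simp
  have h : secMom p a b = -secMom p a b := by
    unfold secMom
    rw [← Finset.sum_neg_distrib]
    refine Fintype.sum_equiv hinv.toPerm _ _ fun x => ?_
    have hpx : p (Function.update x a (!x a)) = p x := by
      refine hJ _ _ fun i hi => ?_
      rw [Function.update_of_ne]
      rintro rfl
      exact ha hi
    simp [hpx, bval_not, Function.update_of_ne hab.symm]
  linarith

lemma sum_secMom_sq_le {n : ℕ} {p : Cube n → ℝ} (hp : IsDist p) {J : Finset (Fin n)}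
    (hJ : JuntaOn J p) : ∑ a, ∑ b, secMom p a b ^ 2 ≤ (J.card : ℝ) ^ 2 + n := by
  have key : ∀ a b : Fin n, secMom p a b ^ 2 ≤
      (if a ∈ J then (1 : ℝ) else 0) * (if b ∈ J then (1 : ℝ) else 0)
        + (if a = b then (1 : ℝ) else 0) := by
    intro a b
    have h1 : secMom p a b ^ 2 ≤ 1 := (sq_le_one_iff_abs_le_one _).2 (abs_secMom_le hp a b)
    by_cases hab : a = b
    · rw [if_pos hab]
      split_ifs <;> linarith
    · by_cases ha : a ∈ J
      · by_cases hb : b ∈ J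
        · simpa [ha, hb, hab] using h1
        · simp [secMom_comm p a b, secMom_eq_zero hJ hb (Ne.symm hab), hb, hab]
      · simp [secMom_eq_zero hJ ha hab, ha, hab]
  refine (Finset.sum_le_sum fun a _ => Finset.sum_le_sum fun b _ => key a b).trans ?_
  simp_rw [Finset.sum_add_distrib]
  rw [← Finset.sum_mul_sum]
  simp [sq]

lemma pairMoment_two {n : ℕ} (p : Cube n → ℝ) :
    pairMoment p 2 = ∑ a, ∑ b, secMom p a b ^ 2 := by
  have h : ∀ x y : Cube n, p x * p y * innerB x y ^ 2 =
      ∑ a, ∑ b, (p x * (bval (x a) * bval (x b))) * (p y * (bval (y a) * bval (y b))) := by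
    intro x y
    unfold innerB
    rw [sq, Finset.sum_mul_sum, Finset.mul_sum]
    refine Finset.sum_congr rfl fun a _ => ?_
    rw [Finset.mul_sum]
    exact Finset.sum_congr rfl fun b _ => by ring
  unfold pairMoment
  simp_rw [h, secMom, sq, Finset.sum_mul_sum]
  calc ∑ x, ∑ y, ∑ a, ∑ b,
        (p x * (bval (x a) * bval (x b))) * (p y * (bval (y a) * bval (y b)))
      = ∑ x, ∑ a, ∑ b, ∑ y,
        (p x * (bval (x a) * bval (x b))) * (p y * (bval (y a) * bval (y b))) := by
        refine Finset.sum_congr rfl fun x _ => ?_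
        rw [Finset.sum_comm]
        exact Finset.sum_congr rfl fun a _ => Finset.sum_comm
    _ = _ := by
        rw [Finset.sum_comm]
        exact Finset.sum_congr rfl fun a _ => Finset.sum_comm

lemma abs_innerB_le {n : ℕ} (x y : Cube n) : |innerB x y| ≤ n := by
  unfold innerB
  refine (Finset.abs_sum_le_sum_abs _ _).trans ?_
  simp [abs_mul, abs_bval]

lemma pairMoment_le {n : ℕ} {p : Cube n → ℝ} (hp : IsDist p) {k : ℕ} (hk : IsJuntaDist k p)
    (s : ℕ) : pairMoment p (s + 2) ≤ ((k : ℝ) + √n) ^ (2 * s + 2) := by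
  obtain ⟨J, hJk, hJ⟩ := hk
  have hA : (k : ℝ) ^ 2 + n ≤ ((k : ℝ) + √n) ^ 2 := by
    have h1 := Real.sq_sqrt (Nat.cast_nonneg (α := ℝ) n)
    have h2 := mul_nonneg (Nat.cast_nonneg (α := ℝ) k) (Real.sqrt_nonneg n)
    nlinarith
  have h2 : pairMoment p 2 ≤ ((k : ℝ) + √n) ^ 2 := by
    rw [pairMoment_two]
    refine (sum_secMom_sq_le hp hJ).trans (le_trans ?_ hA)
    have : (J.card : ℝ) ≤ k := by exact_mod_cast hJk
    gcongr
  have h3 : pairMoment p (s + 2) ≤ (n : ℝ) ^ s * pairMoment p 2 := by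
    unfold pairMoment
    simp_rw [Finset.mul_sum]
    refine Finset.sum_le_sum fun x _ => Finset.sum_le_sum fun y _ => ?_
    have hw : 0 ≤ p x * p y := mul_nonneg (hp.1 x) (hp.1 y)
    rw [mul_left_comm]
    refine mul_le_mul_of_nonneg_left ?_ hw
    rw [pow_add]
    refine mul_le_mul_of_nonneg_right ?_ (sq_nonneg _)
    calc innerB x y ^ s ≤ |innerB x y ^ s| := le_abs_self _
      _ = |innerB x y| ^ s := abs_pow _ _
      _ ≤ (n : ℝ) ^ s := pow_le_pow_left₀ (abs_nonneg _) (abs_innerB_le x y) s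
  have hn : (n : ℝ) ≤ ((k : ℝ) + √n) ^ 2 := by nlinarith [sq_nonneg (k : ℝ)]
  calc pairMoment p (s + 2) ≤ (n : ℝ) ^ s * pairMoment p 2 := h3
    _ ≤ (n : ℝ) ^ s * ((k : ℝ) + √n) ^ 2 := by gcongr
    _ ≤ (((k : ℝ) + √n) ^ 2) ^ s * ((k : ℝ) + √n) ^ 2 := by gcongr
    _ = ((k : ℝ) + √n) ^ (2 * s + 2) := by rw [← pow_mul, ← pow_add]

/-! ### Moments of the statistic -/

lemma Esamp_Zstat {n q : ℕ} {p : Cube n → ℝ} (hp : IsDist p) (hq : 0 < q) (r : ℕ) :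
    Esamp p q (fun X Y => Zstat q r X Y) = pairMoment p (2 ^ r) := by
  have hij : ∀ i j : Fin q, Esamp p q (fun X Y => innerB (X i) (Y j) ^ (2 ^ r)) =
      pairMoment p (2 ^ r) := by
    intro i j
    rw [Esamp_eq]
    simp_rw [fun x : Cube n => Eprod_single hp j (fun y => innerB x y ^ (2 ^ r))]
    rw [Eprod_single hp i (fun x => ∑ y, p y * innerB x y ^ (2 ^ r))]
    unfold pairMoment
    simp_rw [Finset.mul_sum, mul_assoc]
  unfold Zstat
  rw [Esamp_const_mul]
  simp_rw [Esamp_sum, hij]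
  have : (q : ℝ) ≠ 0 := by positivity
  simp
  field_simp

lemma Eprod_sum_mul_sum {n q : ℕ} {p : Cube n → ℝ} (hp : IsDist p) (a b : Fin n) :
    Eprod p q (fun X => (∑ i, bval (X i a)) * ∑ i, bval (X i b)) =
      q * secMom p a b + ((q : ℝ) ^ 2 - q) * (meanVec p a * meanVec p b) := by
  simp_rw [Finset.sum_mul_sum, Eprod_sum]
  have hij : ∀ i j : Fin q, Eprod p q (fun X => bval (X i a) * bval (X j b)) =
      meanVec p a * meanVec p b +
        if i = j then secMom p a b - meanVec p a * meanVec p b else 0 := by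
    intro i j
    split_ifs with h
    · subst h
      rw [Eprod_single hp i (fun x => bval (x a) * bval (x b))]
      unfold secMom
      ring
    · rw [Eprod_pair hp h (fun x => bval (x a)) (fun x => bval (x b))]
      simp [meanVec]
  simp_rw [hij, Finset.sum_add_distrib]
  simp
  ring

lemma Esamp_Zstat_zero_sq_le {n q : ℕ} {p : Cube n → ℝ} (hp : IsDist p) (hq : 0 < q) :
    Esamp p q (fun X Y => Zstat q 0 X Y ^ 2) ≤
      2 * (pairMoment p 2 / (q : ℝ) ^ 2 + (∑ a, meanVec p a ^ 2) ^ 2) := by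
  have hq0 : (1 : ℝ) ≤ q := by exact_mod_cast hq
  have hZ : ∀ X Y : Fin q → Cube n, Zstat q 0 X Y ^ 2 = (1 / (q : ℝ) ^ 4) * ∑ a, ∑ b,
      ((∑ i, bval (X i a)) * ∑ i, bval (X i b)) *
        ((∑ i, bval (Y i a)) * ∑ i, bval (Y i b)) := by
    intro X Y
    have h1 : Zstat q 0 X Y =
        (1 / (q : ℝ) ^ 2) * ∑ a, (∑ i, bval (X i a)) * ∑ j, bval (Y j a) := by
      unfold Zstat innerB
      simp only [pow_zero, pow_one, Finset.sum_mul_sum]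
      congr 1
      conv_rhs => rw [Finset.sum_comm]
      refine Finset.sum_congr rfl fun i _ => ?_
      exact Finset.sum_comm
    rw [h1, mul_pow, sq (∑ a, _), Finset.sum_mul_sum]
    congr 1
    · ring
    · exact Finset.sum_congr rfl fun a _ => Finset.sum_congr rfl fun b _ => by ring
  simp_rw [hZ]
  rw [Esamp_const_mul]
  simp_rw [Esamp_sum, Esamp_mul, Eprod_sum_mul_sum hp]
  have hterm : ∀ a b : Fin n,
      (q * secMom p a b + ((q : ℝ) ^ 2 - q) * (meanVec p a * meanVec p b)) *
        (q * secMom p a b + ((q : ℝ) ^ 2 - q) * (meanVec p a * meanVec p b)) ≤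
      2 * ((q : ℝ) ^ 2 * secMom p a b ^ 2 + (q : ℝ) ^ 4 * (meanVec p a ^ 2 * meanVec p b ^ 2)) := by
    intro a b
    have h1 : ((q : ℝ) ^ 2 - q) ^ 2 ≤ (q : ℝ) ^ 4 := by
      have : ((q : ℝ) ^ 2 - q) ^ 2 ≤ ((q : ℝ) ^ 2) ^ 2 := by
        apply pow_le_pow_left₀ <;> nlinarith
      calc _ ≤ _ := this
        _ = _ := by ring
    have h2 := mul_le_mul_of_nonneg_right h1 (sq_nonneg (meanVec p a * meanVec p b))
    nlinarith [sq_nonneg (q * secMom p a b - ((q : ℝ) ^ 2 - q) * (meanVec p a * meanVec p b))]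
  have hsum := Finset.sum_le_sum fun a (_ : a ∈ univ) =>
    Finset.sum_le_sum fun b (_ : b ∈ univ) => hterm a b
  refine (mul_le_mul_of_nonneg_left hsum (by positivity)).trans (le_of_eq ?_)
  have hprod : ∑ a, ∑ b, meanVec p a ^ 2 * meanVec p b ^ 2 = (∑ a, meanVec p a ^ 2) ^ 2 := by
    rw [sq (∑ a, meanVec p a ^ 2), Finset.sum_mul_sum]
  have hsplit : ∑ a, ∑ b,
      2 * ((q : ℝ) ^ 2 * secMom p a b ^ 2 + (q : ℝ) ^ 4 * (meanVec p a ^ 2 * meanVec p b ^ 2)) =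
      2 * ((q : ℝ) ^ 2 * ∑ a, ∑ b, secMom p a b ^ 2 +
        (q : ℝ) ^ 4 * ∑ a, ∑ b, meanVec p a ^ 2 * meanVec p b ^ 2) := by
    simp only [Finset.mul_sum, Finset.sum_add_distrib, mul_add]
  rw [pairMoment_two, hsplit, hprod]
  field_simp

/-! ### Thresholds -/

/-- The thresholds in closed form, multiplied by `q²` to avoid dividing by `q`. -/
lemma tauSeq_mul (q : ℕ) (ε : ℝ) (n r : ℕ) :
    tauSeq q ε n r * (q : ℝ) ^ 2 = 5000 * ((q : ℝ) ^ 2 * (ε ^ 2 * n) / 10000) ^ (2 ^ r) := by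
  induction r with
  | zero => simp [tauSeq]; ring
  | succ r ih =>
    have : tauSeq q ε n (r + 1) * (q : ℝ) ^ 2 = (tauSeq q ε n r * (q : ℝ) ^ 2) ^ 2 / 5000 := by
      simp only [tauSeq]; ring
    rw [this, ih, pow_succ 2 r, pow_mul]
    ring

lemma tauSeq_pos {q : ℕ} (hq : 0 < q) {ε : ℝ} (hε : 0 < ε) {n : ℕ} (hn : 0 < n) (r : ℕ) :
    0 < tauSeq q ε n r := by
  induction r with
  | zero => simp only [tauSeq]; positivity
  | succ r ih => simp only [tauSeq]; positivity

/-- With `δ = ε √n` and `R = s + 2`: the moment bound `A ^ (2R - 2)` is at most the target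
probability times the threshold (both sides multiplied by `q²`). -/
lemma pow_mul_sq_le {A q δ : ℝ} (hA : 0 < A) (h1 : 1000 * A ≤ q * δ)
    (h2 : 1000 * A ≤ q * δ ^ 2) (s : ℕ) :
    A ^ (2 * s + 2) * q ^ 2 ≤
      (1 / 25) * (1 / 2 : ℝ) ^ (s + 1) * (5000 * (q ^ 2 * δ ^ 2 / 10000) ^ (s + 2)) := by
  have e1 : A ^ 2 ≤ q ^ 2 * δ ^ 2 / 20000 := by
    have := pow_le_pow_left₀ (by positivity) h1 2
    nlinarith [sq_nonneg A]
  have e2 : A ^ 2 * q ^ 2 ≤ 400 * (q ^ 2 * δ ^ 2 / 20000) ^ 2 := by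
    have := mul_le_mul_of_nonneg_left (pow_le_pow_left₀ (by positivity) h2 2) (sq_nonneg q)
    nlinarith
  calc A ^ (2 * s + 2) * q ^ 2 = (A ^ 2) ^ s * (A ^ 2 * q ^ 2) := by
        rw [pow_add, pow_mul]; ring
    _ ≤ (q ^ 2 * δ ^ 2 / 20000) ^ s * (400 * (q ^ 2 * δ ^ 2 / 20000) ^ 2) := by gcongr
    _ = 400 * ((1 / 2) * (q ^ 2 * δ ^ 2 / 10000)) ^ (s + 2) := by ring
    _ = _ := by rw [mul_pow]; ring

/-- completeness of the robust mean tester.  There exist constants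
`C > 0` and `n₀` such that for all `n ≥ n₀`, `k ∈ ℕ`, `ε ∈ (0,1)` and every `k`-junta
distribution `p` on `{-1,1}^n` with `‖μ(p)‖₂ ≤ ε√n/100`, setting
`q = ⌈C·max{(k+√n)/(ε²n), (k+√n)/(ε√n)}⌉`, `r₀ = ⌈log₂ log₂ n⌉` and the thresholds
`τ_0 = ε²n/2`, `τ_r = q²τ_{r-1}²/5000`, for every `r ∈ {0,…,r₀}` one has
`Pr[Z^(r) > τ_r] ≤ (1/25)·(1/2)^{2^r - 1}`. -/
theorem statement14 :
    ∃ C : ℝ, 0 < C ∧ ∃ n₀ : ℕ, ∀ n : ℕ, n₀ ≤ n → ∀ k : ℕ, ∀ ε : ℝ, 0 < ε → ε < 1 →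
      ∀ p : Cube n → ℝ, IsDist p → IsJuntaDist k p →
      Real.sqrt (∑ i, meanVec p i ^ 2) ≤ ε * Real.sqrt n / 100 →
      ∀ q : ℕ,
        q = ⌈C * max (((k : ℝ) + Real.sqrt n) / (ε ^ 2 * n))
              (((k : ℝ) + Real.sqrt n) / (ε * Real.sqrt n))⌉₊ →
      ∀ r ≤ ⌈Real.logb 2 (Real.logb 2 n)⌉₊,
        Prsamp p q (fun X Y => tauSeq q ε n r < Zstat q r X Y) ≤
          (1 / 25) * (1 / 2 : ℝ) ^ (2 ^ r - 1) := by
  refine ⟨1000, by norm_num, 1, ?_⟩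
  intro n hn k ε hε hε1 p hp hk hμ q hq r _
  have hn0 : (0 : ℝ) < n := by exact_mod_cast hn
  have hsn : 0 < √(n : ℝ) := Real.sqrt_pos.2 hn0
  have hsq : √(n : ℝ) ^ 2 = n := Real.sq_sqrt hn0.le
  set A : ℝ := (k : ℝ) + √n with hA_def
  have hA : 0 < A := by positivity
  have hδ : 0 < ε * √n := by positivity
  have hδ2 : (ε * √n) ^ 2 = ε ^ 2 * n := by rw [mul_pow, hsq]
  have hqle := Nat.le_ceil (1000 * max (A / (ε ^ 2 * n)) (A / (ε * √n)))
  rw [← hq] at hqle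
  have h1 : 1000 * A ≤ q * (ε * √n) := by
    rw [← div_le_iff₀ hδ, mul_div_assoc]
    exact (mul_le_mul_of_nonneg_left (le_max_right _ _) (by norm_num)).trans hqle
  have h2 : 1000 * A ≤ q * (ε * √n) ^ 2 := by
    rw [hδ2, ← div_le_iff₀ (by positivity), mul_div_assoc]
    exact (mul_le_mul_of_nonneg_left (le_max_left _ _) (by norm_num)).trans hqle
  have hqR : (0 : ℝ) < q := by
    by_contra h
    have : (q : ℝ) * (ε * √n) ≤ 0 := mul_nonpos_of_nonpos_of_nonneg (not_lt.1 h) hδ.le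
    linarith
  have hq0 : 0 < q := by exact_mod_cast hqR
  have hτ := tauSeq_pos hq0 hε hn r
  rcases Nat.eq_zero_or_pos r with rfl | hr
  · have hM : pairMoment p 2 ≤ A ^ 2 := by simpa using pairMoment_le hp hk 0
    have hmk := (mul_Prsamp_le hp (tauSeq q ε n 0 ^ 2)
      (fun X Y => tauSeq q ε n 0 < Zstat q 0 X Y) (fun X Y => Zstat q 0 X Y ^ 2)
      (fun X Y => sq_nonneg _) (fun X Y h => pow_le_pow_left₀ hτ.le h.le 2)).trans
      (Esamp_Zstat_zero_sq_le hp hq0)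
    have hτ0 : tauSeq q ε n 0 = (ε * √n) ^ 2 / 2 := by rw [hδ2]; rfl
    rw [hτ0] at hmk hτ ⊢
    have hMq : pairMoment p 2 / (q : ℝ) ^ 2 ≤ ((ε * √n) ^ 2) ^ 2 / 1000000 := by
      rw [div_le_iff₀ (by positivity)]
      have := pow_le_pow_left₀ (by positivity) h2 2
      nlinarith
    have hS0 : 0 ≤ ∑ a, meanVec p a ^ 2 := Finset.sum_nonneg fun a _ => sq_nonneg _
    have hS : ∑ a, meanVec p a ^ 2 ≤ (ε * √n) ^ 2 / 10000 := by
      have := (Real.sqrt_le_left (by positivity)).1 hμ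
      linarith [this, show (ε * √n / 100) ^ 2 = (ε * √n) ^ 2 / 10000 by ring]
    have hS2 : (∑ a, meanVec p a ^ 2) ^ 2 ≤ ((ε * √n) ^ 2) ^ 2 / 100000000 := by
      have := pow_le_pow_left₀ hS0 hS 2
      linarith [this, show ((ε * √n) ^ 2 / 10000) ^ 2 = ((ε * √n) ^ 2) ^ 2 / 100000000 by ring]
    have hpos : 0 < ((ε * √n) ^ 2 / 2) ^ 2 := by positivity
    refine le_of_mul_le_mul_left (hmk.trans ?_) hpos
    norm_num
    nlinarith
  · obtain ⟨s, hs⟩ : ∃ s, 2 ^ r = s + 2 := by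
      obtain ⟨t, ht⟩ := Nat.exists_eq_add_of_le (Nat.pow_le_pow_right two_pos hr)
      exact ⟨t, by omega⟩
    have heven : Even (2 ^ r) := (even_two).pow_of_ne_zero hr.ne'
    have hmk := mul_Prsamp_le hp (tauSeq q ε n r)
      (fun X Y => tauSeq q ε n r < Zstat q r X Y) (fun X Y => Zstat q r X Y)
      (fun X Y => mul_nonneg (by positivity) (Finset.sum_nonneg fun i _ =>
        Finset.sum_nonneg fun j _ => heven.pow_nonneg _)) (fun X Y h => h.le)
    rw [Esamp_Zstat hp hq0 r, hs] at hmk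
    have hfin := pow_mul_sq_le hA h1 h2 s
    rw [hδ2, ← hs, ← tauSeq_mul] at hfin
    refine le_of_mul_le_mul_left ((hmk.trans (pairMoment_le hp hk s)).trans ?_) hτ
    rw [hs, show s + 2 - 1 = s + 1 from rfl]
    refine le_of_mul_le_mul_right (hfin.trans (le_of_eq ?_)) (pow_pos hqR 2)
    ring

end JuntaPaper
end
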